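/- For all J > 0, K ≥ 0, n ≥ 1 and t ≥ 0, the magnetization per particle m_n under the cubic Curie–Weiss measure satisfies the concentration inequality P_{n,K,J}( |m_n(X) − tanh( J·m_n(X) + K·m_n(X)² )| ≥ (J + 4K)/n + t/√n ) ≤ 2·exp( −t²/(4·(1 + J + 2K)) ). -/

import Mathlib

/-! The proof is Chatterjee's method of exchangeable pairs. One step of the heat-bath dynamics
resamples a uniformly chosen spin from its conditional law given the others; the conditional mean
of spin `i` is `tanh` of a local field `J a + K a² + K/(3n²)`, with `a = m - x_i/n`. With
`F = x_i - x_i'` as the antisymmetric function, the conditional expectation of the decrease of the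
total magnetization is the drift `f = m - (1/n) ∑ tanh (local field i)`.

Reversing a spin moves `f` by at most `2(1 + J + 2K)/n` because `tanh` is 1-Lipschitz, and
`|F| ≤ 2`. Reversibility rewrites the derivative of `M(θ) = E e^{θf}` as
`½ E F (e^{θf(X)} - e^{θf(X')})`, and `|e^a - e^b| ≤ ½ |a - b| (e^a + e^b)` then gives
`M' ≤ CθM` with `C = 2(1 + J + 2K)/n`; hence `M(θ) ≤ e^{Cθ²/2}`, and Chernoff's bound yields
`P(|f| ≥ s) ≤ 2 e^{-s²/(2C)}` (`exchangeable_concentration`). Finally `f` differs from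
`m - tanh (J m + K m²)` by at most `(J + 4K)/n` (`abs_sub_tanh_le`).

The dynamics is encoded by the single-spin reversals `flipAt i` and their unnormalised rates
`flipRate`; moves that leave the configuration unchanged contribute nothing to `F`. -/


open MeasureTheory ProbabilityTheory Real Filter

noncomputable section

/-- The spin value `±1` associated with a Boolean. -/
def spin (b : Bool) : ℝ := if b then 1 else -1

/-- Total magnetization `S_n(x) = ∑ i, x_i`. -/
def totalMag (n : ℕ) (x : Fin n → Bool) : ℝ := ∑ i, spin (x i)

/-- Magnetization per particle `m_n(x) = S_n(x)/n`. -/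
def magPP (n : ℕ) (x : Fin n → Bool) : ℝ := totalMag n x / n

/-- Boltzmann–Gibbs weight of a configuration in the cubic Curie–Weiss model
(the reference factor `2^{-n}` is constant and cancels upon normalization). -/
def cubicWeight (n : ℕ) (K J : ℝ) (x : Fin n → Bool) : ℝ :=
  Real.exp (n * (K / 3 * (magPP n x) ^ 3 + J / 2 * (magPP n x) ^ 2))

/-- The cubic Curie–Weiss Boltzmann–Gibbs probability measure `P_{n,K,J}`. -/
def cubicMeasure (n : ℕ) (K J : ℝ) : Measure (Fin n → Bool) :=
  (∑ x : Fin n → Bool, ENNReal.ofReal (cubicWeight n K J x))⁻¹ •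
    ∑ x : Fin n → Bool, ENNReal.ofReal (cubicWeight n K J x) • Measure.dirac x

/-- The probability of an event under `P_{n,K,J}`, as a real number. -/
def cubicProb (n : ℕ) (K J : ℝ) (s : Set (Fin n → Bool)) : ℝ :=
  (cubicMeasure n K J s).toReal

/-- The binary relative entropy `I(m)`. -/
def binEnt (m : ℝ) : ℝ :=
  (1 - m) / 2 * Real.log ((1 - m) / 2) + (1 + m) / 2 * Real.log ((1 + m) / 2)

/-- The function `φ_{K,J}(x) = I(x) − (K/3)x³ − (J/2)x²`. -/
def phiKJ (K J : ℝ) (x : ℝ) : ℝ := binEnt x - K / 3 * x ^ 3 - J / 2 * x ^ 2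

/-- The standard normal cumulative distribution function. -/
def stdNormalCDF (z : ℝ) : ℝ :=
  (ProbabilityTheory.gaussianReal 0 1 (Set.Iic z)).toReal

end


/-! ### Elementary inequalities for hyperbolic functions -/

lemma tanh_hasDerivAt (x : ℝ) : HasDerivAt Real.tanh (1 / Real.cosh x ^ 2) x := by
  have h := (Real.hasDerivAt_sinh x).div (Real.hasDerivAt_cosh x) (Real.cosh_pos x).ne'
  have e : Real.tanh = Real.sinh / Real.cosh := by
    funext y
    simp [Real.tanh_eq_sinh_div_cosh]
  rw [e]
  have e2 : (1 : ℝ) = Real.cosh x * Real.cosh x - Real.sinh x * Real.sinh x := by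
    nlinarith [Real.cosh_sq x]
  rwa [← e2] at h

lemma abs_tanh_sub_tanh_le (a b : ℝ) : |Real.tanh a - Real.tanh b| ≤ |a - b| := by
  have h := Convex.norm_image_sub_le_of_norm_hasDerivWithin_le (f := Real.tanh)
    (f' := fun x => 1 / Real.cosh x ^ 2) (s := Set.univ) (C := 1) (x := b) (y := a)
    (fun x _ => (tanh_hasDerivAt x).hasDerivWithinAt)
    (fun x _ => by
      have h1 := Real.one_le_cosh x
      rw [Real.norm_of_nonneg (by positivity), div_le_one (by positivity)]
      nlinarith) convex_univ trivial trivial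
  simpa using h

lemma exp_sub_exp_eq (a b : ℝ) :
    Real.exp a - Real.exp b = Real.tanh ((a - b) / 2) * (Real.exp a + Real.exp b) := by
  have h1 : Real.exp a = Real.exp ((a + b) / 2) * Real.exp ((a - b) / 2) := by
    rw [← Real.exp_add]
    ring_nf
  have h2 : Real.exp b = Real.exp ((a + b) / 2) * Real.exp (-((a - b) / 2)) := by
    rw [← Real.exp_add]
    ring_nf
  have h3 : 0 < Real.exp ((a - b) / 2) + Real.exp (-((a - b) / 2)) := by positivity
  rw [Real.tanh_eq, h1, h2]
  field_simp

/-- The logarithmic-mean inequality: the mean slope of `exp` on an interval is at most the average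
of its endpoint values. -/
lemma abs_exp_sub_exp_le (a b : ℝ) :
    |Real.exp a - Real.exp b| ≤ |a - b| / 2 * (Real.exp a + Real.exp b) := by
  have h := abs_tanh_sub_tanh_le ((a - b) / 2) 0
  rw [Real.tanh_zero, sub_zero, sub_zero, abs_div, abs_two] at h
  rw [exp_sub_exp_eq, abs_mul, abs_of_pos (a := Real.exp a + Real.exp b) (by positivity)]
  gcongr

/-! ### Concentration from an exchangeable pair -/

section Exchangeable

variable {α ι : Type*} [Fintype α] [Fintype ι]

/-- The antisymmetry of `F` and the reversibility of the rates `q` turn the derivative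
`∑ w f e^{θf}` of the moment generating function into a sum of increments of `e^{θf}`, which is
then bounded by `Cθ` times the generating function itself. -/
lemma sum_mul_exp_le (w f : α → ℝ) (φ : ι → α → α) (q F : ι → α → ℝ) (C : ℝ)
    (hφ : ∀ i, Function.Involutive (φ i))
    (hq0 : ∀ i x, 0 ≤ q i x) (hq : ∀ i x, q i (φ i x) = q i x)
    (hF : ∀ i x, F i (φ i x) = -F i x)
    (hf : ∀ x, ∑ i, q i x * F i x = w x * f x)
    (hqw : ∀ x, ∑ i, q i x ≤ w x)
    (hC0 : 0 ≤ C) (hC : ∀ i x, |F i x| * |f x - f (φ i x)| ≤ 2 * C)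
    (θ : ℝ) (hθ : 0 ≤ θ) :
    ∑ x, w x * (f x * Real.exp (θ * f x)) ≤ C * θ * ∑ x, w x * Real.exp (θ * f x) := by
  have swap : ∀ i (g : α → ℝ), ∑ x, g (φ i x) = ∑ x, g x := fun i g =>
    Equiv.sum_comp (hφ i).toPerm g
  have h1 : ∑ x, w x * (f x * Real.exp (θ * f x))
      = ∑ i, ∑ x, q i x * F i x * Real.exp (θ * f x) := by
    rw [Finset.sum_comm]
    refine Finset.sum_congr rfl fun x _ => ?_
    rw [← Finset.sum_mul, hf]
    ring
  have h2 : ∀ i, ∑ x, q i x * F i x * Real.exp (θ * f x)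
      = 1 / 2 * ∑ x, q i x * F i x * (Real.exp (θ * f x) - Real.exp (θ * f (φ i x))) := by
    intro i
    have h := swap i (fun x => q i x * F i x * Real.exp (θ * f x))
    simp only [hq, hF] at h
    have h' : ∑ x, q i x * F i x * (Real.exp (θ * f x) - Real.exp (θ * f (φ i x)))
        = ∑ x, q i x * F i x * Real.exp (θ * f x)
          + ∑ x, q i x * -F i x * Real.exp (θ * f (φ i x)) := by
      rw [← Finset.sum_add_distrib]
      exact Finset.sum_congr rfl fun x _ => by ring
    rw [h', h]
    ring
  have h3 : ∀ i, ∑ x, q i x * F i x * (Real.exp (θ * f x) - Real.exp (θ * f (φ i x)))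
      ≤ 2 * (C * θ) * ∑ x, q i x * Real.exp (θ * f x) := by
    intro i
    have hs := swap i (fun x => q i x * Real.exp (θ * f x))
    simp only [hq] at hs
    have e : 2 * (C * θ) * ∑ x, q i x * Real.exp (θ * f x)
        = ∑ x, C * θ * (q i x * Real.exp (θ * f x) + q i x * Real.exp (θ * f (φ i x))) := by
      rw [← Finset.mul_sum, Finset.sum_add_distrib, hs]
      ring
    rw [e]
    refine Finset.sum_le_sum fun x _ => ?_
    have hb := abs_exp_sub_exp_le (θ * f x) (θ * f (φ i x))
    rw [← mul_sub, abs_mul, abs_of_nonneg hθ] at hb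
    calc q i x * F i x * (Real.exp (θ * f x) - Real.exp (θ * f (φ i x)))
        ≤ |q i x * F i x * (Real.exp (θ * f x) - Real.exp (θ * f (φ i x)))| := le_abs_self _
      _ = q i x * (|F i x| * |Real.exp (θ * f x) - Real.exp (θ * f (φ i x))|) := by
          rw [abs_mul, abs_mul, abs_of_nonneg (hq0 i x), mul_assoc]
      _ ≤ q i x * (|F i x| * (θ * |f x - f (φ i x)| / 2
            * (Real.exp (θ * f x) + Real.exp (θ * f (φ i x))))) :=
          mul_le_mul_of_nonneg_left (mul_le_mul_of_nonneg_left hb (abs_nonneg _)) (hq0 i x)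
      _ = q i x * ((|F i x| * |f x - f (φ i x)|) * (θ / 2
            * (Real.exp (θ * f x) + Real.exp (θ * f (φ i x))))) := by ring
      _ ≤ q i x * (2 * C * (θ / 2
            * (Real.exp (θ * f x) + Real.exp (θ * f (φ i x))))) :=
          mul_le_mul_of_nonneg_left (mul_le_mul_of_nonneg_right (hC i x) (by positivity)) (hq0 i x)
      _ = C * θ * (q i x * Real.exp (θ * f x) + q i x * Real.exp (θ * f (φ i x))) := by ring
  have h4 : ∑ i, ∑ x, q i x * Real.exp (θ * f x) ≤ ∑ x, w x * Real.exp (θ * f x) := by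
    rw [Finset.sum_comm]
    refine Finset.sum_le_sum fun x _ => ?_
    rw [← Finset.sum_mul]
    exact mul_le_mul_of_nonneg_right (hqw x) (Real.exp_pos _).le
  calc ∑ x, w x * (f x * Real.exp (θ * f x))
      = ∑ i, 1 / 2 * ∑ x, q i x * F i x * (Real.exp (θ * f x) - Real.exp (θ * f (φ i x))) := by
        rw [h1]
        exact Finset.sum_congr rfl fun i _ => h2 i
    _ ≤ ∑ i, 1 / 2 * (2 * (C * θ) * ∑ x, q i x * Real.exp (θ * f x)) :=
        Finset.sum_le_sum fun i _ => mul_le_mul_of_nonneg_left (h3 i) (by norm_num)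
    _ = C * θ * ∑ i, ∑ x, q i x * Real.exp (θ * f x) := by
        rw [Finset.mul_sum]
        exact Finset.sum_congr rfl fun i _ => by ring
    _ ≤ C * θ * ∑ x, w x * Real.exp (θ * f x) :=
        mul_le_mul_of_nonneg_left h4 (by positivity)

/-- Gronwall: a generating function `M` with `M' ≤ CθM` on `θ ≥ 0` satisfies
`M θ ≤ e^{Cθ²/2} M 0`. -/
lemma sum_exp_le (w f : α → ℝ) (C : ℝ)
    (h : ∀ θ : ℝ, 0 ≤ θ →
      ∑ x, w x * (f x * Real.exp (θ * f x)) ≤ C * θ * ∑ x, w x * Real.exp (θ * f x))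
    (θ : ℝ) (hθ : 0 ≤ θ) :
    ∑ x, w x * Real.exp (θ * f x) ≤ Real.exp (C * θ ^ 2 / 2) * ∑ x, w x := by
  have hM : ∀ r : ℝ, HasDerivAt (fun r => ∑ x, w x * Real.exp (r * f x))
      (∑ x, w x * (f x * Real.exp (r * f x))) r := by
    intro r
    refine HasDerivAt.fun_sum fun x _ => ?_
    have := (((hasDerivAt_id r).mul_const (f x)).exp).const_mul (w x)
    refine this.congr_deriv ?_
    simp only [id]
    ring
  have hE : ∀ r : ℝ, HasDerivAt (fun r : ℝ => Real.exp (-(C * r ^ 2 / 2)))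
      (Real.exp (-(C * r ^ 2 / 2)) * -(C * r)) r := by
    intro r
    have := (((hasDerivAt_pow 2 r).const_mul C).div_const 2).neg.exp
    refine this.congr_deriv ?_
    simp
    ring
  have hG := fun r => (hM r).mul (hE r)
  have hanti := antitoneOn_of_deriv_nonpos (convex_Ici (0 : ℝ))
    (fun r _ => (hG r).continuousAt.continuousWithinAt)
    (fun r _ => (hG r).differentiableAt.differentiableWithinAt)
    (fun r hr => by
      rw [interior_Ici] at hr
      rw [(hG r).deriv]
      have h1 := h r (le_of_lt hr)
      have h2 := mul_le_mul_of_nonneg_left h1 (Real.exp_pos (-(C * r ^ 2 / 2))).le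
      nlinarith)
  have h0 := hanti (Set.mem_Ici.2 le_rfl) (Set.mem_Ici.2 hθ) hθ
  simp only [Pi.mul_apply, zero_mul, Real.exp_zero, mul_one, ne_eq, OfNat.ofNat_ne_zero,
    not_false_eq_true, zero_pow, mul_zero, zero_div, neg_zero] at h0
  rw [Real.exp_neg, ← div_eq_mul_inv, div_le_iff₀ (Real.exp_pos _)] at h0
  linarith

/-- The Chernoff bound, at its optimal parameter `θ = s / C`. -/
lemma chernoff (w f : α → ℝ) (C : ℝ) (hw : ∀ x, 0 ≤ w x) (hC : 0 < C)
    (h : ∀ θ : ℝ, 0 ≤ θ →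
      ∑ x, w x * Real.exp (θ * f x) ≤ Real.exp (C * θ ^ 2 / 2) * ∑ x, w x)
    (s : ℝ) (hs : 0 ≤ s) [DecidablePred fun x => s ≤ f x] :
    ∑ x with s ≤ f x, w x ≤ Real.exp (-s ^ 2 / (2 * C)) * ∑ x, w x := by
  have hθ : 0 ≤ s / C := by positivity
  have h1 : Real.exp (s / C * s) * ∑ x with s ≤ f x, w x
      ≤ ∑ x, w x * Real.exp (s / C * f x) := by
    rw [Finset.mul_sum]
    refine (Finset.sum_le_sum fun x hx => ?_).trans
      (Finset.sum_le_sum_of_subset_of_nonneg (Finset.filter_subset _ _)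
        fun x _ _ => mul_nonneg (hw x) (Real.exp_pos _).le)
    rw [mul_comm]
    have hx' : s ≤ f x := (Finset.mem_filter.1 hx).2
    have := hw x
    gcongr
  have h2 := h1.trans (h _ hθ)
  have e : Real.exp (C * (s / C) ^ 2 / 2)
      = Real.exp (s / C * s) * Real.exp (-s ^ 2 / (2 * C)) := by
    rw [← Real.exp_add]
    congr 1
    field_simp
    ring
  rw [e, mul_assoc] at h2
  exact le_of_mul_le_mul_left h2 (Real.exp_pos _)

/-- Chatterjee's concentration inequality for a finite space, with the exchangeable pair given by
involutions `φ i` chosen with reversible (unnormalised) rates `q i`. -/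
lemma exchangeable_concentration (w f : α → ℝ) (φ : ι → α → α) (q F : ι → α → ℝ) (C : ℝ)
    (hw : ∀ x, 0 ≤ w x)
    (hφ : ∀ i, Function.Involutive (φ i))
    (hq0 : ∀ i x, 0 ≤ q i x) (hq : ∀ i x, q i (φ i x) = q i x)
    (hF : ∀ i x, F i (φ i x) = -F i x)
    (hf : ∀ x, ∑ i, q i x * F i x = w x * f x)
    (hqw : ∀ x, ∑ i, q i x ≤ w x)
    (hC0 : 0 < C) (hC : ∀ i x, |F i x| * |f x - f (φ i x)| ≤ 2 * C)
    (s : ℝ) (hs : 0 ≤ s) [DecidablePred fun x => s ≤ |f x|] :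
    ∑ x with s ≤ |f x|, w x ≤ 2 * Real.exp (-s ^ 2 / (2 * C)) * ∑ x, w x := by
  classical
  have hp := chernoff w f C hw hC0 (sum_exp_le w f C
    (sum_mul_exp_le w f φ q F C hφ hq0 hq hF hf hqw hC0.le hC)) s hs
  have hm := chernoff w (fun x => -f x) C hw hC0 (sum_exp_le w (fun x => -f x) C
    (sum_mul_exp_le w (fun x => -f x) φ q (fun i x => -F i x) C hφ hq0 hq
      (fun i x => by rw [hF])
      (fun x => by simp only [mul_neg, Finset.sum_neg_distrib, hf]) hqw hC0.le
      (fun i x => by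
        have := hC i x
        rwa [abs_neg, neg_sub_neg, abs_sub_comm]))) s hs
  have hsub : (Finset.univ.filter fun x => s ≤ |f x|)
      ⊆ (Finset.univ.filter fun x => s ≤ f x) ∪ (Finset.univ.filter fun x => s ≤ -f x) := by
    intro x
    simp [le_abs]
  have hu := Finset.sum_union_inter (f := w) (s₁ := Finset.univ.filter fun x => s ≤ f x)
    (s₂ := Finset.univ.filter fun x => s ≤ -f x)
  have hi : 0 ≤ ∑ x ∈ (Finset.univ.filter fun x => s ≤ f x) ∩
      (Finset.univ.filter fun x => s ≤ -f x), w x := Finset.sum_nonneg fun x _ => hw x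
  have hle := Finset.sum_le_sum_of_subset_of_nonneg hsub fun x _ _ => hw x
  linarith

end Exchangeable

/-! ### Single-spin dynamics of the cubic Curie–Weiss model -/

/-- The configuration `x` with its `i`-th spin reversed. -/
def flipAt {n : ℕ} (i : Fin n) (x : Fin n → Bool) : Fin n → Bool :=
  Function.update x i (!x i)

lemma flipAt_involutive {n : ℕ} (i : Fin n) : Function.Involutive (flipAt i) := by
  intro x
  simp [flipAt]

lemma flipAt_same {n : ℕ} (i : Fin n) (x : Fin n → Bool) : flipAt i x i = !x i := by
  simp [flipAt]

lemma flipAt_of_ne {n : ℕ} {i j : Fin n} (h : j ≠ i) (x : Fin n → Bool) :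
    flipAt i x j = x j := by
  simp [flipAt, h]

lemma spin_not (b : Bool) : spin (!b) = -spin b := by
  cases b <;> simp [spin]

lemma abs_spin (b : Bool) : |spin b| = 1 := by
  cases b <;> simp [spin]

lemma spin_eq (b : Bool) : spin b = 1 ∨ spin b = -1 := by
  cases b <;> simp [spin]

lemma totalMag_flipAt {n : ℕ} (i : Fin n) (x : Fin n → Bool) :
    totalMag n (flipAt i x) = totalMag n x - 2 * spin (x i) := by
  unfold totalMag
  rw [← Finset.add_sum_erase _ _ (Finset.mem_univ i),
    ← Finset.add_sum_erase _ (fun j => spin (x j)) (Finset.mem_univ i), flipAt_same, spin_not,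
    Finset.sum_congr rfl fun j hj => by rw [flipAt_of_ne (Finset.ne_of_mem_erase hj)]]
  ring

lemma magPP_flipAt {n : ℕ} (i : Fin n) (x : Fin n → Bool) :
    magPP n (flipAt i x) = magPP n x - 2 * spin (x i) / n := by
  rw [magPP, totalMag_flipAt, magPP, sub_div]

/-- The contribution to the magnetization per particle of the spins other than the `i`-th. -/
noncomputable def restMag {n : ℕ} (i : Fin n) (x : Fin n → Bool) : ℝ := magPP n x - spin (x i) / n

/-- The effective field on spin `i`: the conditional mean of spin `i` given the others is the
hyperbolic tangent of this quantity. -/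
noncomputable def localField {n : ℕ} (K J : ℝ) (i : Fin n) (x : Fin n → Bool) : ℝ :=
  J * restMag i x + K * restMag i x ^ 2 + K / (3 * (n : ℝ) ^ 2)

/-- The average over `i` of `x_i` minus the conditional mean of spin `i` given the others. -/
noncomputable def drift (n : ℕ) (K J : ℝ) (x : Fin n → Bool) : ℝ :=
  magPP n x - (∑ i, Real.tanh (localField K J i x)) / n

lemma abs_magPP_le {n : ℕ} (hn : 1 ≤ n) (x : Fin n → Bool) : |magPP n x| ≤ 1 := by
  have hn0 : (0 : ℝ) < n := by exact_mod_cast hn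
  rw [magPP, abs_div, abs_of_pos hn0, div_le_one hn0, totalMag]
  refine (Finset.abs_sum_le_sum_abs _ _).trans ?_
  simp [abs_spin]

lemma abs_restMag_le {n : ℕ} (i : Fin n) (x : Fin n → Bool) : |restMag i x| ≤ 1 := by
  have hn : 0 < n := i.pos
  have hn0 : (0 : ℝ) < n := by exact_mod_cast hn
  have e : restMag i x = (∑ j ∈ Finset.univ.erase i, spin (x j)) / n := by
    rw [restMag, magPP, totalMag, ← Finset.add_sum_erase _ _ (Finset.mem_univ i)]
    ring
  rw [e, abs_div, abs_of_pos hn0, div_le_one hn0]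
  refine (Finset.abs_sum_le_sum_abs _ _).trans ?_
  simp only [abs_spin, Finset.sum_const, nsmul_eq_mul, mul_one, Nat.cast_le]
  exact (Finset.card_le_univ _).trans (by simp)

lemma restMag_flipAt_same {n : ℕ} (i : Fin n) (x : Fin n → Bool) :
    restMag i (flipAt i x) = restMag i x := by
  rw [restMag, restMag, magPP_flipAt, flipAt_same, spin_not]
  ring

lemma restMag_flipAt_of_ne {n : ℕ} {i j : Fin n} (h : j ≠ i) (x : Fin n → Bool) :
    restMag j (flipAt i x) = restMag j x - 2 * spin (x i) / n := by
  rw [restMag, restMag, magPP_flipAt, flipAt_of_ne h]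
  ring

lemma abs_two_spin_div {n : ℕ} (b : Bool) : |2 * spin b / (n : ℝ)| = 2 / n := by
  rw [abs_div, abs_mul, abs_spin, abs_two, mul_one, Nat.abs_cast]

lemma abs_field_sub_le {K J : ℝ} (hJ : 0 ≤ J) (hK : 0 ≤ K) {a b c : ℝ} (ha : |a| ≤ 1)
    (hb : |b| ≤ 1) (hab : |a - b| ≤ c) :
    |(J * a + K * a ^ 2) - (J * b + K * b ^ 2)| ≤ (J + 2 * K) * c := by
  have e : (J * a + K * a ^ 2) - (J * b + K * b ^ 2) = (a - b) * (J + K * (a + b)) := by ring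
  have h2 : |a + b| ≤ 2 := (abs_add_le a b).trans (by linarith)
  have h3 : |J + K * (a + b)| ≤ J + 2 * K := by
    refine (abs_add_le _ _).trans ?_
    rw [abs_mul, abs_of_nonneg hJ, abs_of_nonneg hK]
    nlinarith
  rw [e, abs_mul, mul_comm]
  exact mul_le_mul h3 hab (abs_nonneg _) (by positivity)

/-- Reversing one spin changes the drift by at most `2(1 + J + 2K)/n`. -/
lemma abs_drift_sub_le {n : ℕ} {K J : ℝ} (hJ : 0 ≤ J) (hK : 0 ≤ K) (i : Fin n)
    (x : Fin n → Bool) :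
    |drift n K J x - drift n K J (flipAt i x)| ≤ 2 * (1 + J + 2 * K) / n := by
  have hn0 : (0 : ℝ) < n := by exact_mod_cast i.pos
  have hj : ∀ j, |Real.tanh (localField K J j x) - Real.tanh (localField K J j (flipAt i x))|
      ≤ (J + 2 * K) * (2 / n) := by
    intro j
    refine (abs_tanh_sub_tanh_le _ _).trans ?_
    rw [localField, localField, add_sub_add_right_eq_sub]
    refine abs_field_sub_le hJ hK (abs_restMag_le _ _) (abs_restMag_le _ _) ?_
    by_cases h : j = i
    · subst h
      rw [restMag_flipAt_same, sub_self, abs_zero]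
      positivity
    · rw [restMag_flipAt_of_ne h, sub_sub_cancel, abs_two_spin_div]
  have hsum : |∑ j, Real.tanh (localField K J j x)
      - ∑ j, Real.tanh (localField K J j (flipAt i x))| ≤ n * ((J + 2 * K) * (2 / n)) := by
    rw [← Finset.sum_sub_distrib]
    refine (Finset.abs_sum_le_sum_abs _ _).trans ((Finset.sum_le_sum fun j _ => hj j).trans ?_)
    simp
  have e : drift n K J x - drift n K J (flipAt i x) = 2 * spin (x i) / n
      - (∑ j, Real.tanh (localField K J j x)
        - ∑ j, Real.tanh (localField K J j (flipAt i x))) / n := by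
    rw [drift, drift, magPP_flipAt]
    ring
  rw [e]
  refine (abs_sub _ _).trans ?_
  rw [abs_two_spin_div, abs_div, abs_of_pos hn0]
  calc 2 / (n : ℝ) + |∑ j, Real.tanh (localField K J j x)
      - ∑ j, Real.tanh (localField K J j (flipAt i x))| / n
      ≤ 2 / (n : ℝ) + n * ((J + 2 * K) * (2 / n)) / n := by gcongr
    _ = 2 * (1 + J + 2 * K) / n := by
      field_simp
      ring

/-- Replacing every local field by its mean-field value `J m + K m²` costs at most
`(J + 4K)/n`. -/
lemma abs_sub_tanh_le {n : ℕ} (hn : 1 ≤ n) {K J : ℝ} (hJ : 0 ≤ J) (hK : 0 ≤ K)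
    (x : Fin n → Bool) :
    |magPP n x - Real.tanh (J * magPP n x + K * magPP n x ^ 2)|
      ≤ (J + 4 * K) / n + |drift n K J x| := by
  have hn0 : (0 : ℝ) < n := by exact_mod_cast hn
  have hn1 : (1 : ℝ) ≤ n := by exact_mod_cast hn
  set T := Real.tanh (J * magPP n x + K * magPP n x ^ 2) with hT
  have hj : ∀ j, |Real.tanh (localField K J j x) - T| ≤ (J + 4 * K) / n := by
    intro j
    refine (abs_tanh_sub_tanh_le _ _).trans ?_
    have h1 := abs_field_sub_le hJ hK (c := 1 / n) (abs_restMag_le j x) (abs_magPP_le hn x) (by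
      rw [restMag, sub_sub_cancel_left, abs_neg, abs_div, abs_spin, Nat.abs_cast])
    have h2 : K / (3 * (n : ℝ) ^ 2) ≤ K / n := by
      gcongr
      nlinarith
    have h3 : 0 ≤ K / (3 * (n : ℝ) ^ 2) := by positivity
    have h4 : 0 ≤ K / n := by positivity
    have e : (J + 4 * K) / n = (J + 2 * K) * (1 / n) + K / n + K / n := by ring
    rw [localField, add_sub_right_comm, e]
    refine (abs_add_le _ _).trans ?_
    rw [abs_of_nonneg h3]
    linarith
  have hsum : |(∑ j, Real.tanh (localField K J j x)) / n - T| ≤ (J + 4 * K) / n := by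
    have e : (∑ j, Real.tanh (localField K J j x)) / n - T
        = (∑ j, (Real.tanh (localField K J j x) - T)) / n := by
      rw [Finset.sum_sub_distrib]
      simp only [Finset.sum_const, Finset.card_univ, Fintype.card_fin, nsmul_eq_mul]
      field_simp
    rw [e, abs_div, abs_of_pos hn0, div_le_iff₀ hn0]
    refine (Finset.abs_sum_le_sum_abs _ _).trans ((Finset.sum_le_sum fun j _ => hj j).trans ?_)
    simp [mul_comm]
  have e : magPP n x - T = ((∑ j, Real.tanh (localField K J j x)) / n - T) + drift n K J x := by
    rw [drift]
    ring
  rw [e]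
  exact (abs_add_le _ _).trans (by linarith)

lemma cubicWeight_pos (n : ℕ) (K J : ℝ) (x : Fin n → Bool) : 0 < cubicWeight n K J x :=
  Real.exp_pos _

/-- The unnormalised rate of the heat-bath move at site `i`: the weight of `x`, times the
probability `1/n` of selecting `i`, times the conditional probability of reversing that spin. -/
noncomputable def flipRate {n : ℕ} (K J : ℝ) (i : Fin n) (x : Fin n → Bool) : ℝ :=
  cubicWeight n K J x * cubicWeight n K J (flipAt i x)
    / (cubicWeight n K J x + cubicWeight n K J (flipAt i x)) / n

/-- Up to its sign, the local field at `i` is half the difference of the energies of `x` and its reversal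
at `i`; the weights therefore give `tanh` of that field as conditional mean of spin `i`. -/
lemma cubicWeight_sub_flipAt {n : ℕ} (K J : ℝ) (i : Fin n) (x : Fin n → Bool) :
    cubicWeight n K J x - cubicWeight n K J (flipAt i x)
      = spin (x i) * Real.tanh (localField K J i x)
        * (cubicWeight n K J x + cubicWeight n K J (flipAt i x)) := by
  have hn0 : (n : ℝ) ≠ 0 := by exact_mod_cast i.pos.ne'
  have hx : magPP n x = restMag i x + spin (x i) / n := by
    rw [restMag]
    ring
  have hy : magPP n (flipAt i x) = restMag i x - spin (x i) / n := by
    rw [magPP_flipAt, restMag]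
    ring
  unfold cubicWeight
  rw [exp_sub_exp_eq, hx, hy]
  congr 1
  rcases spin_eq (x i) with h | h
  · rw [h, one_mul, localField]
    congr 1
    field_simp
    ring
  · rw [h, neg_one_mul, ← Real.tanh_neg, localField]
    congr 1
    field_simp
    ring

lemma flipRate_mul_spin {n : ℕ} (K J : ℝ) (i : Fin n) (x : Fin n → Bool) :
    flipRate K J i x * (2 * spin (x i))
      = cubicWeight n K J x * ((spin (x i) - Real.tanh (localField K J i x)) / n) := by
  have hn0 : (n : ℝ) ≠ 0 := by exact_mod_cast i.pos.ne'
  have h := cubicWeight_sub_flipAt K J i x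
  have hs : spin (x i) * spin (x i) = 1 := by
    rcases spin_eq (x i) with h | h <;> rw [h] <;> norm_num
  have ha := cubicWeight_pos n K J x
  have hb := cubicWeight_pos n K J (flipAt i x)
  rw [flipRate]
  set a := cubicWeight n K J x
  set b := cubicWeight n K J (flipAt i x)
  have hab : a + b ≠ 0 := by positivity
  field_simp
  linear_combination (-spin (x i)) * h - (Real.tanh (localField K J i x) * (a + b)) * hs

lemma sum_flipRate_mul_spin {n : ℕ} (K J : ℝ) (x : Fin n → Bool) :
    ∑ i, flipRate K J i x * (2 * spin (x i)) = cubicWeight n K J x * drift n K J x := by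
  simp only [flipRate_mul_spin]
  rw [← Finset.mul_sum, ← Finset.sum_div, Finset.sum_sub_distrib, drift, magPP, totalMag, sub_div]

lemma flipRate_nonneg {n : ℕ} (K J : ℝ) (i : Fin n) (x : Fin n → Bool) :
    0 ≤ flipRate K J i x := by
  have ha := cubicWeight_pos n K J x
  have hb := cubicWeight_pos n K J (flipAt i x)
  unfold flipRate
  positivity

lemma flipRate_flipAt {n : ℕ} (K J : ℝ) (i : Fin n) (x : Fin n → Bool) :
    flipRate K J i (flipAt i x) = flipRate K J i x := by
  rw [flipRate, flipRate, flipAt_involutive i x, mul_comm, add_comm]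

lemma sum_flipRate_le {n : ℕ} (hn : 1 ≤ n) (K J : ℝ) (x : Fin n → Bool) :
    ∑ i, flipRate K J i x ≤ cubicWeight n K J x := by
  have hn0 : (0 : ℝ) < n := by exact_mod_cast hn
  have h : ∀ i ∈ (Finset.univ : Finset (Fin n)), flipRate K J i x ≤ cubicWeight n K J x / n := by
    intro i _
    have ha := cubicWeight_pos n K J x
    have hb := cubicWeight_pos n K J (flipAt i x)
    unfold flipRate
    gcongr
    rw [div_le_iff₀ (by positivity)]
    nlinarith [mul_pos ha ha]
  refine (Finset.sum_le_sum h).trans (le_of_eq ?_)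
  simp only [Finset.sum_const, Finset.card_univ, Fintype.card_fin, nsmul_eq_mul]
  field_simp

open scoped Classical in
lemma cubicProb_eq (n : ℕ) (K J : ℝ) (s : Set (Fin n → Bool)) :
    cubicProb n K J s = (∑ x with x ∈ s, cubicWeight n K J x) / ∑ x, cubicWeight n K J x := by
  have hs : MeasurableSet s := s.toFinite.measurableSet
  have hw := fun x => (cubicWeight_pos n K J x).le
  have e : ∑ x, ENNReal.ofReal (cubicWeight n K J x) * s.indicator 1 x
      = ENNReal.ofReal (∑ x with x ∈ s, cubicWeight n K J x) := by
    rw [ENNReal.ofReal_sum_of_nonneg fun x _ => hw x, Finset.sum_filter]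
    refine Finset.sum_congr rfl fun x _ => ?_
    by_cases h : x ∈ s <;> simp [h]
  rw [cubicProb, cubicMeasure]
  simp only [Measure.smul_apply, Measure.finsetSum_apply, smul_eq_mul,
    Measure.dirac_apply' _ hs]
  rw [e, ← ENNReal.ofReal_sum_of_nonneg fun x _ => hw x, ENNReal.toReal_mul, ENNReal.toReal_inv,
    ENNReal.toReal_ofReal (Finset.sum_nonneg fun x _ => hw x),
    ENNReal.toReal_ofReal (Finset.sum_nonneg fun x _ => hw x), mul_comm, div_eq_mul_inv]

/-- Concentration inequality for the magnetization per particle in the cubic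
Curie–Weiss model: for all `J > 0`, `K ≥ 0`, `n ≥ 1` and `t ≥ 0`,
`P_{n,K,J}(|m_n − tanh(J m_n + K m_n²)| ≥ (J+4K)/n + t/√n)
  ≤ 2 exp(−t²/(4(1+J+2K)))`. -/
theorem stmt_16 (K J : ℝ) (hJ : 0 < J) (hK : 0 ≤ K) (n : ℕ) (hn : 1 ≤ n)
    (t : ℝ) (ht : 0 ≤ t) :
    cubicProb n K J
        {x | (J + 4 * K) / n + t / Real.sqrt n ≤
          |magPP n x - Real.tanh (J * magPP n x + K * (magPP n x) ^ 2)|} ≤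
      2 * Real.exp (-t ^ 2 / (4 * (1 + J + 2 * K))) := by
  classical
  have hn0 : (0 : ℝ) < n := by exact_mod_cast hn
  have hJK : 0 < 1 + J + 2 * K := by linarith
  have hw := fun x => (cubicWeight_pos n K J x).le
  have hconc := exchangeable_concentration (cubicWeight n K J) (drift n K J) flipAt
    (flipRate K J) (fun i x => 2 * spin (x i)) (2 * (1 + J + 2 * K) / n) hw flipAt_involutive
    (flipRate_nonneg K J) (flipRate_flipAt K J)
    (fun i x => by rw [flipAt_same, spin_not, mul_neg])
    (sum_flipRate_mul_spin K J) (sum_flipRate_le hn K J) (by positivity)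
    (fun i x => by
      rw [abs_mul, abs_spin, abs_two, mul_one]
      exact mul_le_mul_of_nonneg_left (abs_drift_sub_le hJ.le hK i x) (by norm_num))
    (t / Real.sqrt n) (by positivity)
  have hexp : -(t / Real.sqrt n) ^ 2 / (2 * (2 * (1 + J + 2 * K) / n))
      = -t ^ 2 / (4 * (1 + J + 2 * K)) := by
    rw [div_pow, Real.sq_sqrt hn0.le]
    field_simp
    ring
  rw [hexp] at hconc
  have hZ : 0 < ∑ x, cubicWeight n K J x :=
    Finset.sum_pos (fun x _ => cubicWeight_pos n K J x) ⟨fun _ => true, Finset.mem_univ _⟩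
  rw [cubicProb_eq, div_le_iff₀ hZ]
  refine le_trans (Finset.sum_le_sum_of_subset_of_nonneg ?_ fun x _ _ => hw x) hconc
  intro x
  simp only [Finset.mem_filter, Finset.mem_univ, true_and, Set.mem_ofPred_eq]
  intro hx
  have := abs_sub_tanh_le hn hJ.le hK x
  linarith
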